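/- (Secrecy of NA in Needham–Schroeder–Lowe.) If evs ∈ nsl, A ∉ bad, B ∉ bad and Says A B (Crypt (pubK B) ⟨Nonce NA, Agent A⟩) ∈ set evs, then Nonce NA ∉ analz (spies evs), i.e. the spy cannot obtain the nonce NA. -/

import Mathlib

inductive agent : Type
  | Server : agent
  | Friend : ℕ → agent
  | Spy : agent
deriving DecidableEq

inductive msg : Type
  | Agent : agent → msg
  | Number : ℕ → msg
  | Nonce : ℕ → msg
  | Key : ℕ → msg
  | Hash : msg → msg
  | MPair : msg → msg → msg
  | Crypt : ℕ → msg → msg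
deriving DecidableEq

inductive partsP (H : Set msg) : msg → Prop
  | Inj : ∀ X, X ∈ H → partsP H X
  | Fst : ∀ X Y, partsP H (msg.MPair X Y) → partsP H X
  | Snd : ∀ X Y, partsP H (msg.MPair X Y) → partsP H Y
  | Body : ∀ K X, partsP H (msg.Crypt K X) → partsP H X

/-- `parts H`: sub-components of messages of `H`. -/
def parts (H : Set msg) : Set msg := {X | partsP H X}

inductive analzP (invKey : ℕ → ℕ) (H : Set msg) : msg → Prop
  | Inj : ∀ X, X ∈ H → analzP invKey H X
  | Fst : ∀ X Y, analzP invKey H (msg.MPair X Y) → analzP invKey H X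
  | Snd : ∀ X Y, analzP invKey H (msg.MPair X Y) → analzP invKey H Y
  | Decrypt : ∀ K X, analzP invKey H (msg.Crypt K X) →
      analzP invKey H (msg.Key (invKey K)) → analzP invKey H X

/-- `analz invKey H`: what can be obtained by decomposing and decrypting messages of `H`. -/
def analz (invKey : ℕ → ℕ) (H : Set msg) : Set msg := {X | analzP invKey H X}

inductive synthP (H : Set msg) : msg → Prop
  | Inj : ∀ X, X ∈ H → synthP H X
  | Ag : ∀ a, synthP H (msg.Agent a)
  | Num : ∀ n, synthP H (msg.Number n)
  | Hsh : ∀ X, synthP H X → synthP H (msg.Hash X)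
  | Pr : ∀ X Y, synthP H X → synthP H Y → synthP H (msg.MPair X Y)
  | Cry : ∀ K X, synthP H X → msg.Key K ∈ H → synthP H (msg.Crypt K X)

/-- `synth H`: messages that can be synthesized from `H`. -/
def synth (H : Set msg) : Set msg := {X | synthP H X}

inductive guardP (invKey : ℕ → ℕ) (n : ℕ) (Ks : Set ℕ) : msg → Prop
  | No_Nonce : ∀ X, msg.Nonce n ∉ parts {X} → guardP invKey n Ks X
  | Guard : ∀ K X, invKey K ∈ Ks → guardP invKey n Ks (msg.Crypt K X)
  | Cry : ∀ K X, guardP invKey n Ks X → guardP invKey n Ks (msg.Crypt K X)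
  | Pr : ∀ X Y, guardP invKey n Ks X → guardP invKey n Ks Y →
      guardP invKey n Ks (msg.MPair X Y)

/-- `guard n Ks`: messages in which `Nonce n` is guarded by the keys of `Ks`. -/
def guardMsg (invKey : ℕ → ℕ) (n : ℕ) (Ks : Set ℕ) : Set msg := {X | guardP invKey n Ks X}

/-- `Guard n Ks H`: every message of `H` lies in `guard n Ks`. -/
def Guard (invKey : ℕ → ℕ) (n : ℕ) (Ks : Set ℕ) (H : Set msg) : Prop :=
  ∀ X ∈ H, X ∈ guardMsg invKey n Ks
inductive event : Type
  | Says : agent → agent → msg → event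
deriving DecidableEq

def msgOf : event → msg
  | event.Says _ _ X => X

/-- Set of messages sent in a trace. -/
def sent (evs : List event) : Set msg :=
  {X | ∃ A B, event.Says A B X ∈ evs}
/-- Private key of an agent: the inverse of its public key. -/
def priK (invKey : ℕ → ℕ) (pubK : agent → ℕ) (A : agent) : ℕ := invKey (pubK A)

/-- Initial knowledge of each agent in a public-key infrastructure:
every agent knows its own private key and all public keys; the spy moreover
knows the private keys of the bad agents. -/
def initStatePK (invKey : ℕ → ℕ) (pubK : agent → ℕ) (bad : Set agent) : agent → Set msg :=
  fun A =>
    match A with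
    | agent.Spy =>
        {X | ∃ B ∈ bad, X = msg.Key (priK invKey pubK B)} ∪ {X | ∃ B, X = msg.Key (pubK B)}
    | _ => {msg.Key (priK invKey pubK A)} ∪ {X | ∃ B, X = msg.Key (pubK B)}

/-- `spies evs`: the private keys of the bad agents, all public keys, and
every message sent in `evs`. -/
def spiesPK (invKey : ℕ → ℕ) (pubK : agent → ℕ) (bad : Set agent) (evs : List event) :
    Set msg :=
  initStatePK invKey pubK bad agent.Spy ∪ sent evs

/-- `used evs`: parts of all agents' initial knowledge and of all messages sent in `evs`. -/
def usedPK (invKey : ℕ → ℕ) (pubK : agent → ℕ) (bad : Set agent) (evs : List event) :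
    Set msg :=
  parts ((⋃ A, initStatePK invKey pubK bad A) ∪ sent evs)
/-- The Needham–Schroeder–Lowe protocol. -/
inductive nsl (invKey : ℕ → ℕ) (pubK : agent → ℕ) (bad : Set agent) : List event → Prop
  | Nil : nsl invKey pubK bad []
  | Fake : ∀ evs B X, nsl invKey pubK bad evs →
      X ∈ synth (analz invKey (spiesPK invKey pubK bad evs)) →
      nsl invKey pubK bad (event.Says agent.Spy B X :: evs)
  | NS1 : ∀ evs A B NA, nsl invKey pubK bad evs →
      msg.Nonce NA ∉ usedPK invKey pubK bad evs →
      nsl invKey pubK bad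
        (event.Says A B (msg.Crypt (pubK B) (msg.MPair (msg.Nonce NA) (msg.Agent A))) :: evs)
  | NS2 : ∀ evs A A' B NA NB, nsl invKey pubK bad evs →
      msg.Nonce NB ∉ usedPK invKey pubK bad evs →
      event.Says A' B (msg.Crypt (pubK B) (msg.MPair (msg.Nonce NA) (msg.Agent A))) ∈ evs →
      nsl invKey pubK bad
        (event.Says B A (msg.Crypt (pubK A)
          (msg.MPair (msg.Nonce NA) (msg.MPair (msg.Nonce NB) (msg.Agent B)))) :: evs)
  | NS3 : ∀ evs A B B' NA NB, nsl invKey pubK bad evs →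
      event.Says A B (msg.Crypt (pubK B) (msg.MPair (msg.Nonce NA) (msg.Agent A))) ∈ evs →
      event.Says B' A (msg.Crypt (pubK A)
        (msg.MPair (msg.Nonce NA) (msg.MPair (msg.Nonce NB) (msg.Agent B)))) ∈ evs →
      nsl invKey pubK bad (event.Says A B (msg.Crypt (pubK B) (msg.Nonce NB)) :: evs)

/-!
Let the good agent `A` issue the nonce `NA` for the good agent `B`. In every message sent, `NA`
occurs only inside the request `Crypt (pubK B) ⟨NA, A⟩` of this run or inside an answer
`Crypt (pubK A) ⟨NA, NB, B⟩` with `NB ≠ NA`, and the private keys of `A` and `B` do not occur at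
all. The spy can neither open these ciphertexts nor break the invariant by building messages.
A responder who extracts `NA` from a permitted request is `B` answering `A`, so the answer is again
a permitted one; an initiator who decrypts a permitted answer sends back `NB`, which is not `NA`.
-/

section Confinement

/-- `Confined n Ks E X`: outside the ciphertexts in `E`, the message `X` contains neither `Nonce n`
nor a key of `Ks`. The contents of hashes are ignored, since `analz` cannot recover them. -/
def Confined (n : ℕ) (Ks : Set ℕ) (E : Set msg) : msg → Prop
  | .Agent _ => True
  | .Number _ => True
  | .Nonce m => m ≠ n
  | .Key K => K ∉ Ks
  | .Hash _ => True
  | .MPair X Y => Confined n Ks E X ∧ Confined n Ks E Y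
  | .Crypt K X => msg.Crypt K X ∈ E ∨ Confined n Ks E X

variable {n : ℕ} {Ks : Set ℕ} {E H : Set msg}

theorem confined_of_mem_analz {invKey : ℕ → ℕ} (hE : ∀ K X, msg.Crypt K X ∈ E → invKey K ∈ Ks)
    (hH : ∀ X ∈ H, Confined n Ks E X) : ∀ X ∈ analz invKey H, Confined n Ks E X := by
  intro X hX
  induction hX with
  | Inj X hX => exact hH X hX
  | Fst X Y _ ih => exact ih.1
  | Snd X Y _ ih => exact ih.2
  | Decrypt K X _ _ ihCrypt ihKey => exact ihCrypt.resolve_left fun hmem => ihKey (hE K X hmem)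

theorem confined_of_mem_synth (hH : ∀ X ∈ H, Confined n Ks E X) :
    ∀ X ∈ synth H, Confined n Ks E X := by
  intro X hX
  induction hX with
  | Inj X hX => exact hH X hX
  | Ag | Num | Hsh => trivial
  | Pr X Y _ _ ihX ihY => exact ⟨ihX, ihY⟩
  | Cry K X _ _ ihX => exact .inr ihX

end Confinement

section Traces

variable {invKey : ℕ → ℕ} {pubK : agent → ℕ} {bad : Set agent} {evs : List event}

theorem parts_mono {G H : Set msg} (h : G ⊆ H) : parts G ⊆ parts H := by
  intro X hX
  induction hX with
  | Inj X hX => exact .Inj X (h hX)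
  | Fst X Y _ ih => exact .Fst X Y ih
  | Snd X Y _ ih => exact .Snd X Y ih
  | Body K X _ ih => exact .Body K X ih

theorem sent_subset_sent_cons (e : event) (evs : List event) : sent evs ⊆ sent (e :: evs) :=
  fun _ ⟨C, D, h⟩ => ⟨C, D, List.mem_cons_of_mem e h⟩

theorem usedPK_subset_usedPK_cons (e : event) (evs : List event) :
    usedPK invKey pubK bad evs ⊆ usedPK invKey pubK bad (e :: evs) :=
  parts_mono (Set.union_subset_union_right _ (sent_subset_sent_cons e evs))

theorem mem_usedPK_of_says {C D : agent} {X : msg} (h : event.Says C D X ∈ evs) :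
    X ∈ usedPK invKey pubK bad evs :=
  .Inj X (.inr ⟨C, D, h⟩)

theorem mem_of_mem_usedPK_of_cons {e f : event} {X : msg}
    (h : X ∈ usedPK invKey pubK bad (e :: evs) → f ∈ e :: evs)
    (hne : X ∈ usedPK invKey pubK bad evs → f ≠ e) :
    X ∈ usedPK invKey pubK bad evs → f ∈ evs :=
  fun hused => List.mem_of_ne_of_mem (hne hused) (h (usedPK_subset_usedPK_cons e evs hused))

theorem forall_sent_cons {P : msg → Prop} {C D : agent} {X : msg} (hX : P X)
    (hsent : ∀ Y ∈ sent evs, P Y) : ∀ Y ∈ sent (event.Says C D X :: evs), P Y := by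
  rintro Y ⟨C', D', hY⟩
  rcases List.mem_cons.1 hY with heq | hmem
  · obtain ⟨-, -, rfl⟩ := event.Says.inj heq
    exact hX
  · exact hsent Y ⟨C', D', hmem⟩

end Traces

section Protocol

/-- The first message `{NA, A}` of a run, encrypted for the responder `B`. -/
abbrev ns1Msg (pubK : agent → ℕ) (A B : agent) (NA : ℕ) : msg :=
  .Crypt (pubK B) (.MPair (.Nonce NA) (.Agent A))

/-- The second message `{NA, NB, B}` of a run, encrypted for the initiator `A`. -/
abbrev ns2Msg (pubK : agent → ℕ) (A B : agent) (NA NB : ℕ) : msg :=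
  .Crypt (pubK A) (.MPair (.Nonce NA) (.MPair (.Nonce NB) (.Agent B)))

/-- The ciphertexts in which the nonce `NA`, issued by `A` for `B`, may legitimately travel. -/
def carriers (pubK : agent → ℕ) (A B : agent) (NA : ℕ) : Set msg :=
  {X | X = ns1Msg pubK A B NA ∨ ∃ NB ≠ NA, X = ns2Msg pubK A B NA NB}

/-- The secrecy invariant for the nonce `NA` issued by `A` for `B`: the private keys of `A` and `B`
do not occur in the message, and `NA` occurs only inside its legitimate carriers. -/
abbrev RunConfined (invKey : ℕ → ℕ) (pubK : agent → ℕ) (A B : agent) (NA : ℕ) : msg → Prop :=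
  Confined NA {priK invKey pubK A, priK invKey pubK B} (carriers pubK A B NA)

variable {invKey : ℕ → ℕ} {pubK : agent → ℕ} {bad : Set agent} {evs : List event}
  {A B A' B' : agent} {n NA NB : ℕ}

theorem nonce_mem_usedPK_of_says_ns1Msg {C D : agent}
    (h : event.Says C D (ns1Msg pubK A B NA) ∈ evs) :
    msg.Nonce NA ∈ usedPK invKey pubK bad evs :=
  .Fst _ _ (.Body _ _ (mem_usedPK_of_says h))

theorem nonce_mem_usedPK_of_says_ns2Msg {C D : agent}
    (h : event.Says C D (ns2Msg pubK A B NA NB) ∈ evs) :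
    msg.Nonce NB ∈ usedPK invKey pubK bad evs :=
  .Fst _ _ (.Snd _ _ (.Body _ _ (mem_usedPK_of_says h)))

theorem invKey_mem_of_crypt_mem_carriers (K : ℕ) (X : msg)
    (h : msg.Crypt K X ∈ carriers pubK A B n) :
    invKey K ∈ ({priK invKey pubK A, priK invKey pubK B} : Set ℕ) := by
  rcases h with h | ⟨NB, -, h⟩
  · obtain ⟨rfl, -⟩ := msg.Crypt.inj h
    exact .inr rfl
  · obtain ⟨rfl, -⟩ := msg.Crypt.inj h
    exact .inl rfl

theorem runConfined_of_mem_spiesPK (hpri : Function.Injective (priK invKey pubK))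
    (hpubpri : ∀ C D : agent, pubK C ≠ priK invKey pubK D) (hA : A ∉ bad) (hB : B ∉ bad)
    (hsent : ∀ X ∈ sent evs, RunConfined invKey pubK A B n X) :
    ∀ X ∈ spiesPK invKey pubK bad evs, RunConfined invKey pubK A B n X := by
  rintro X ((⟨C, hC, rfl⟩ | ⟨C, rfl⟩) | hX)
  · rintro (heq | heq)
    · exact hA (hpri heq ▸ hC)
    · exact hB (hpri heq ▸ hC)
  · rintro (heq | heq)
    · exact hpubpri C A heq
    · exact hpubpri C B heq
  · exact hsent X hX

theorem runConfined_of_mem_analz_spiesPK (hpri : Function.Injective (priK invKey pubK))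
    (hpubpri : ∀ C D : agent, pubK C ≠ priK invKey pubK D) (hA : A ∉ bad) (hB : B ∉ bad)
    (hsent : ∀ X ∈ sent evs, RunConfined invKey pubK A B n X) :
    ∀ X ∈ analz invKey (spiesPK invKey pubK bad evs), RunConfined invKey pubK A B n X :=
  confined_of_mem_analz invKey_mem_of_crypt_mem_carriers
    (runConfined_of_mem_spiesPK hpri hpubpri hA hB hsent)

theorem runConfined_ns1Msg (h : NA = n → A' = A ∧ B' = B) :
    RunConfined invKey pubK A B n (ns1Msg pubK A' B' NA) := by
  by_cases hNA : NA = n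
  · obtain ⟨rfl, rfl⟩ := h hNA
    subst hNA
    exact .inl (.inl rfl)
  · exact .inr ⟨hNA, trivial⟩

theorem runConfined_ns2Msg (hpub : Function.Injective pubK) (hNB : NB ≠ n)
    (h : RunConfined invKey pubK A B n (ns1Msg pubK A' B' NA)) :
    RunConfined invKey pubK A B n (ns2Msg pubK A' B' NA NB) := by
  rcases h with (heq | ⟨_, -, heq⟩) | ⟨hNA, -⟩
  · simp only [msg.Crypt.injEq, msg.MPair.injEq, msg.Nonce.injEq, msg.Agent.injEq] at heq
    obtain ⟨hkey, rfl, rfl⟩ := heq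
    obtain rfl := hpub hkey
    exact .inl (.inr ⟨NB, hNB, rfl⟩)
  · simp at heq
  · exact .inr ⟨hNA, hNB, trivial⟩

theorem runConfined_ns3Msg (K : ℕ) (h : RunConfined invKey pubK A B n (ns2Msg pubK A' B' NA NB)) :
    RunConfined invKey pubK A B n (.Crypt K (.Nonce NB)) := by
  rcases h with (heq | ⟨m, hm, heq⟩) | ⟨-, hNB, -⟩
  · simp at heq
  · simp only [msg.Crypt.injEq, msg.MPair.injEq, msg.Nonce.injEq] at heq
    obtain ⟨-, -, rfl, -⟩ := heq
    exact .inr hm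
  · exact .inr hNB

/- `horigin` is an implication, hence true of traces in which `n` is still unused: the induction
passes through these before it reaches the event that issues `n`. -/
theorem nsl.runConfined_of_mem_sent (hpri : Function.Injective (priK invKey pubK))
    (hpubpri : ∀ C D : agent, pubK C ≠ priK invKey pubK D) (hspy : agent.Spy ∈ bad)
    (hA : A ∉ bad) (hB : B ∉ bad) (hevs : nsl invKey pubK bad evs)
    (horigin : msg.Nonce n ∈ usedPK invKey pubK bad evs →
      event.Says A B (ns1Msg pubK A B n) ∈ evs) :
    ∀ X ∈ sent evs, RunConfined invKey pubK A B n X := by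
  induction hevs with
  | Nil => rintro X ⟨C, D, h⟩; cases h
  | Fake evs C X _ hX ih =>
    have hsent := ih <| mem_of_mem_usedPK_of_cons horigin fun _ heq =>
      hA ((event.Says.inj heq).1 ▸ hspy)
    exact forall_sent_cons (confined_of_mem_synth
      (runConfined_of_mem_analz_spiesPK hpri hpubpri hA hB hsent) X hX) hsent
  | NS1 evs C D NA _ hfresh ih =>
    have hsent := ih <| mem_of_mem_usedPK_of_cons horigin fun hused heq => by
      simp only [event.Says.injEq, msg.Crypt.injEq, msg.MPair.injEq, msg.Nonce.injEq] at heq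
      exact hfresh (heq.2.2.2.1 ▸ hused)
    refine forall_sent_cons (runConfined_ns1Msg ?_) hsent
    rintro rfl
    rcases List.mem_cons.1 (horigin (nonce_mem_usedPK_of_says_ns1Msg List.mem_cons_self)) with
      heq | hmem
    · obtain ⟨rfl, rfl, -⟩ := event.Says.inj heq
      exact ⟨rfl, rfl⟩
    · exact absurd (nonce_mem_usedPK_of_says_ns1Msg hmem) hfresh
  | NS2 evs C C' D NA NB _ hfresh hrequest ih =>
    have hsent := ih <| mem_of_mem_usedPK_of_cons horigin fun _ => by simp
    have hNB : NB ≠ n := by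
      rintro rfl
      have hmem := horigin (nonce_mem_usedPK_of_says_ns2Msg List.mem_cons_self)
      exact hfresh (nonce_mem_usedPK_of_says_ns1Msg (List.mem_of_ne_of_mem (by simp) hmem))
    have hpub : Function.Injective pubK := Function.Injective.of_comp hpri
    exact forall_sent_cons (runConfined_ns2Msg hpub hNB (hsent _ ⟨C', D, hrequest⟩)) hsent
  | NS3 evs C D D' NA NB _ _ hanswer ih =>
    have hsent := ih <| mem_of_mem_usedPK_of_cons horigin fun _ => by simp
    exact forall_sent_cons (runConfined_ns3Msg _ (hsent _ ⟨D', C, hanswer⟩)) hsent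

end Protocol

/-- Secrecy of `NA` in Needham–Schroeder–Lowe. -/
theorem NA_secrecy
    (invKey : ℕ → ℕ) (pubK : agent → ℕ) (bad : Set agent)
    (hinv : ∀ K, invKey (invKey K) = K)
    (hpub : Function.Injective pubK)
    (hpri : Function.Injective (priK invKey pubK))
    (hpubpri : ∀ A B : agent, pubK A ≠ priK invKey pubK B)
    (hspy : agent.Spy ∈ bad)
    (evs : List event) (A B : agent) (NA : ℕ)
    (hevs : nsl invKey pubK bad evs) (hA : A ∉ bad) (hB : B ∉ bad)
    (hsays : event.Says A B (msg.Crypt (pubK B) (msg.MPair (msg.Nonce NA) (msg.Agent A))) ∈ evs) :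
    msg.Nonce NA ∉ analz invKey (spiesPK invKey pubK bad evs) := by
  intro hNA
  have hsent : ∀ X ∈ sent evs, RunConfined invKey pubK A B NA X :=
    hevs.runConfined_of_mem_sent hpri hpubpri hspy hA hB fun _ => hsays
  have hne : NA ≠ NA := runConfined_of_mem_analz_spiesPK hpri hpubpri hA hB hsent _ hNA
  exact hne rfl
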